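/- arXiv:1202.3426 — 2 statements merged into one kernel-verified Lean document; each statement's English description precedes it below -/
import Mathlib

section
/- Let N ≥ 3 be an integer, let q > p > 2 be real numbers and let ε ≥ 0. Suppose u : ℝ^N → ℝ is a twice continuously differentiable function with u(x) > 0 for all x ∈ ℝ^N, u(x) → 0 as |x| → ∞, satisfying -Δu(x) + ε u(x) - u(x)^{p-1} + u(x)^{q-1} = 0 for all x ∈ ℝ^N. Then u(x) ≤ 1 for every x ∈ ℝ^N. -/
open MeasureTheory Filter Set Topology
noncomputable section

/-- The Euclidean Laplacian of `u : ℝ^N → ℝ`: the sum of the second partial derivatives. -/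
def lap {N : ℕ} (u : EuclideanSpace ℝ (Fin N) → ℝ) (x : EuclideanSpace ℝ (Fin N)) : ℝ :=
  ∑ i, fderiv ℝ (fun y => fderiv ℝ u y (EuclideanSpace.single i 1)) x (EuclideanSpace.single i 1)

/-- Second-order necessary condition for a local maximum in one variable. -/
theorem IsLocalMax.deriv_deriv_nonpos {g : ℝ → ℝ} {a : ℝ} (h : IsLocalMax g a)
    (hg : ContinuousAt g a) : deriv (deriv g) a ≤ 0 := by
  by_contra! hlt
  have hmin : IsLocalMin g a := isLocalMin_of_deriv_deriv_pos hlt h.deriv_eq_zero hg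
  have hconst : g =ᶠ[𝓝 a] fun _ => g a := by
    filter_upwards [h, hmin] with y h₁ h₂ using le_antisymm h₁ h₂
  have hzero : deriv (deriv g) a = 0 := by
    rw [hconst.deriv.deriv_eq]
    simp
  exact hlt.ne' hzero

/-- The pure second directional derivatives of a `C^2` function are nonpositive
at a local maximum. -/
theorem IsLocalMax.fderiv_fderiv_apply_nonpos {E : Type*} [NormedAddCommGroup E]
    [NormedSpace ℝ E] {u : E → ℝ} {x : E} (h : IsLocalMax u x) (hu : ContDiff ℝ 2 u) (e : E) :
    fderiv ℝ (fun y => fderiv ℝ u y e) x e ≤ 0 := by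
  have hline (t : ℝ) : HasDerivAt (fun t : ℝ => x + t • e) e t := by
    simpa using ((hasDerivAt_id t).smul_const e).const_add x
  have hderiv : deriv (fun t : ℝ => u (x + t • e)) = fun t => fderiv ℝ u (x + t • e) e := by
    funext t
    exact ((hu.differentiable (by norm_num) _).hasFDerivAt.comp_hasDerivAt t (hline t)).deriv
  have hdiff : Differentiable ℝ fun y => fderiv ℝ u y e :=
    ((hu.fderiv_right (m := 1) (by norm_num)).differentiable (by norm_num)).clm_apply
      (differentiable_const e)
  have hderiv₂ : deriv (deriv fun t : ℝ => u (x + t • e)) 0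
      = fderiv ℝ (fun y => fderiv ℝ u y e) x e := by
    rw [hderiv]
    simpa [Function.comp_def] using ((hdiff _).hasFDerivAt.comp_hasDerivAt (0 : ℝ) (hline 0)).deriv
  have htend : Tendsto (fun t : ℝ => x + t • e) (𝓝 0) (𝓝 x) := by
    simpa [ContinuousAt] using (hline 0).continuousAt
  have hmax : IsLocalMax (fun t : ℝ => u (x + t • e)) 0 := by
    simpa [IsLocalMax, IsMaxFilter] using htend.eventually h
  rw [← hderiv₂]
  exact hmax.deriv_deriv_nonpos
    (hu.continuous.continuousAt.comp (hline 0).continuousAt)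

theorem lap_nonpos_of_isLocalMax {N : ℕ} {u : EuclideanSpace ℝ (Fin N) → ℝ}
    {x : EuclideanSpace ℝ (Fin N)} (h : IsLocalMax u x) (hu : ContDiff ℝ 2 u) : lap u x ≤ 0 :=
  Finset.sum_nonpos fun _ _ => h.fderiv_fderiv_apply_nonpos hu _

/-- a positive classical solution of `-Δu + εu - u^{p-1} + u^{q-1} = 0`
decaying at infinity satisfies `u ≤ 1`. -/
theorem stmt_0 (N : ℕ) (hN : 3 ≤ N) (p q ε : ℝ) (hp : 2 < p) (hpq : p < q) (hε : 0 ≤ ε)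
    (u : EuclideanSpace ℝ (Fin N) → ℝ) (hu : ContDiff ℝ 2 u)
    (hpos : ∀ x, 0 < u x)
    (hdecay : Tendsto u (cocompact (EuclideanSpace ℝ (Fin N))) (𝓝 0))
    (hpde : ∀ x, -lap u x + ε * u x - u x ^ (p - 1) + u x ^ (q - 1) = 0) :
    ∀ x, u x ≤ 1 := by
  intro x
  by_contra! hx
  obtain ⟨x₀, hx₀⟩ : ∃ x₀, ∀ y, u y ≤ u x₀ :=
    hu.continuous.exists_forall_ge' x
      ((hdecay.eventually (gt_mem_nhds (hpos x))).mono fun _ hy => hy.le)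
  have hlap : lap u x₀ ≤ 0 :=
    lap_nonpos_of_isLocalMax (Eventually.of_forall hx₀) hu
  have hpow : u x₀ ^ (p - 1) < u x₀ ^ (q - 1) :=
    Real.rpow_lt_rpow_of_exponent_lt (hx.trans_le (hx₀ x)) (by linarith)
  linarith [hpde x₀, mul_nonneg hε (hpos x₀).le]
end
end

section
/- Let N ≥ 3 be an integer, let C > 0, γ > 2, and let β be a real number with -(N-2)-(γ-2) < β < -(N-2). Then there exists R ≥ 1 such that for every m ≥ 0 the function h : ℝ^N \ {0} → ℝ defined by h(x) := (|x|^{-(N-2)} + |x|^β) e^{-m|x|} satisfies -Δh(x) + C |x|^{-γ} h(x) + m² h(x) ≤ 0 for all x ∈ ℝ^N with |x| > R. -/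
open MeasureTheory Filter Set Topology
noncomputable section

/-- The derivative of the Euclidean norm away from the origin. -/
lemma hasFDerivAt_norm_of_ne_zero {E : Type*} [NormedAddCommGroup E] [InnerProductSpace ℝ E]
    {x : E} (hx : x ≠ 0) :
    HasFDerivAt (fun y : E => ‖y‖) (‖x‖⁻¹ • innerSL ℝ x) x := by
  have hpos : 0 < ‖x‖ := norm_pos_iff.mpr hx
  have h := (hasStrictFDerivAt_norm_sq x).hasFDerivAt.sqrt (by positivity)
  simp only [Real.sqrt_sq (norm_nonneg _)] at h
  refine h.congr_fderiv ?_
  ext v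
  simp
  field_simp

/-- The Laplacian of a radial function away from the origin. -/
lemma lap_radial {N : ℕ} {g g' : ℝ → ℝ} {g'' : ℝ} {x : EuclideanSpace ℝ (Fin N)} (hx : x ≠ 0)
    (hg : ∀ r > 0, HasDerivAt g (g' r) r) (hg' : HasDerivAt g' g'' ‖x‖) :
    lap (fun y => g ‖y‖) x = g'' + ((N : ℝ) - 1) * ‖x‖⁻¹ * g' ‖x‖ := by
  have hpos : 0 < ‖x‖ := norm_pos_iff.mpr hx
  have hfirst (i : Fin N) :
      (fun y => fderiv ℝ (fun y : EuclideanSpace ℝ (Fin N) => g ‖y‖) y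
        (EuclideanSpace.single i 1)) =ᶠ[𝓝 x] fun y => g' ‖y‖ / ‖y‖ * y i := by
    filter_upwards [isOpen_ne.mem_nhds hx] with y hy
    have h := (hg ‖y‖ (norm_pos_iff.mpr hy)).comp_hasFDerivAt y (hasFDerivAt_norm_of_ne_zero hy)
    have h' : HasFDerivAt (fun y : EuclideanSpace ℝ (Fin N) => g ‖y‖) _ y := h
    rw [h'.fderiv]
    simp [EuclideanSpace.inner_single_right]
    ring
  have hquot : HasDerivAt (fun r => g' r / r) ((g'' * ‖x‖ - g' ‖x‖ * 1) / ‖x‖ ^ 2) ‖x‖ :=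
    hg'.fun_div (hasDerivAt_id' _) hpos.ne'
  have hsecond (i : Fin N) :
      fderiv ℝ (fun y => fderiv ℝ (fun y : EuclideanSpace ℝ (Fin N) => g ‖y‖) y
        (EuclideanSpace.single i 1)) x (EuclideanSpace.single i 1)
        = (g'' * ‖x‖ - g' ‖x‖) / ‖x‖ ^ 3 * x i ^ 2 + g' ‖x‖ / ‖x‖ := by
    rw [(hfirst i).fderiv_eq]
    have h : HasFDerivAt (fun y : EuclideanSpace ℝ (Fin N) => g' ‖y‖ / ‖y‖) _ x :=
      hquot.comp_hasFDerivAt x (hasFDerivAt_norm_of_ne_zero hx)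
    have hcoord : HasFDerivAt (fun y : EuclideanSpace ℝ (Fin N) => y i)
        (EuclideanSpace.proj i : EuclideanSpace ℝ (Fin N) →L[ℝ] ℝ) x :=
      (EuclideanSpace.proj i : EuclideanSpace ℝ (Fin N) →L[ℝ] ℝ).hasFDerivAt
    rw [(h.fun_mul hcoord).fderiv]
    simp [EuclideanSpace.inner_single_right]
    field_simp
    ring
  have hnorm : ∑ i, x i ^ 2 = ‖x‖ ^ 2 := (EuclideanSpace.real_norm_sq_eq x).symm
  simp only [lap, hsecond, Finset.sum_add_distrib, ← Finset.mul_sum, hnorm]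
  simp
  field_simp
  ring

/-- The derivative of `(p r^a + q r^b) e^{-mr}`. -/
lemma hasDerivAt_rpow_add_rpow_mul_exp (p q a b m : ℝ) {r : ℝ} (hr : 0 < r) :
    HasDerivAt (fun r => (p * r ^ a + q * r ^ b) * Real.exp (-(m * r)))
      ((p * (a * r ^ (a - 1)) + q * (b * r ^ (b - 1)) - m * (p * r ^ a + q * r ^ b))
        * Real.exp (-(m * r))) r := by
  have ha := (Real.hasDerivAt_rpow_const (p := a) (Or.inl hr.ne')).const_mul p
  have hb := (Real.hasDerivAt_rpow_const (p := b) (Or.inl hr.ne')).const_mul q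
  have he := (((hasDerivAt_id' r).const_mul m).fun_neg).exp
  refine ((ha.fun_add hb).fun_mul he).congr_deriv ?_
  ring

/-- The Laplacian of `(|x|^a + |x|^b) e^{-m|x|}` away from the origin. -/
lemma lap_rpow_add_rpow_mul_exp {N : ℕ} (a b m : ℝ) {x : EuclideanSpace ℝ (Fin N)}
    (hx : x ≠ 0) :
    lap (fun y => (‖y‖ ^ a + ‖y‖ ^ b) * Real.exp (-(m * ‖y‖))) x =
      (a * (a + N - 2) * ‖x‖ ^ (a - 2) + b * (b + N - 2) * ‖x‖ ^ (b - 2)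
        - m * ((2 * a + N - 1) * ‖x‖ ^ (a - 1) + (2 * b + N - 1) * ‖x‖ ^ (b - 1))
        + m ^ 2 * (‖x‖ ^ a + ‖x‖ ^ b)) * Real.exp (-(m * ‖x‖)) := by
  have hpos : 0 < ‖x‖ := norm_pos_iff.mpr hx
  have hg (r : ℝ) (hr : r > 0) :
      HasDerivAt (fun r : ℝ => (r ^ a + r ^ b) * Real.exp (-(m * r)))
        ((a * r ^ (a - 1) + b * r ^ (b - 1)) * Real.exp (-(m * r))
          - m * ((1 * r ^ a + 1 * r ^ b) * Real.exp (-(m * r)))) r := by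
    have h := hasDerivAt_rpow_add_rpow_mul_exp 1 1 a b m hr
    simp only [one_mul] at h ⊢
    exact h.congr_deriv (by ring)
  have hg' := (hasDerivAt_rpow_add_rpow_mul_exp a b (a - 1) (b - 1) m hpos).fun_sub
    ((hasDerivAt_rpow_add_rpow_mul_exp 1 1 a b m hpos).const_mul m)
  rw [lap_radial hx hg hg']
  have hshift (c : ℝ) : ‖x‖ ^ c = ‖x‖ ^ (c - 2) * ‖x‖ ^ 2 := by
    rw [← Real.rpow_add_natCast hpos.ne']
    norm_num
  have hshift' (c : ℝ) : ‖x‖ ^ (c - 1) = ‖x‖ ^ (c - 2) * ‖x‖ := by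
    rw [← Real.rpow_add_one hpos.ne']
    ring_nf
  have hsub (c : ℝ) : c - 1 - 1 = c - 2 := by ring
  rw [hsub, hsub, hshift' a, hshift' b, hshift a, hshift b]
  field_simp
  ring

/-- the lower barrier `h(x) = (|x|^{-(N-2)} + |x|^β) e^{-m|x|}` satisfies
`-Δh + C|x|^{-γ} h + m² h ≤ 0` outside a large ball, uniformly in `m ≥ 0`. -/
theorem stmt_10 (N : ℕ) (hN : 3 ≤ N) (C γ β : ℝ) (hC : 0 < C) (hγ : 2 < γ)
    (hβ₁ : -((N:ℝ) - 2) - (γ - 2) < β) (hβ₂ : β < -((N:ℝ) - 2)) :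
    ∃ R ≥ (1:ℝ), ∀ m ≥ (0:ℝ), ∀ x : EuclideanSpace ℝ (Fin N), R < ‖x‖ →
      -lap (fun y => (‖y‖ ^ (-((N:ℝ) - 2)) + ‖y‖ ^ β) * Real.exp (-(m * ‖y‖))) x
        + C * ‖x‖ ^ (-γ) * ((‖x‖ ^ (-((N:ℝ) - 2)) + ‖x‖ ^ β) * Real.exp (-(m * ‖x‖)))
        + m ^ 2 * ((‖x‖ ^ (-((N:ℝ) - 2)) + ‖x‖ ^ β) * Real.exp (-(m * ‖x‖))) ≤ 0 := by
  have hN' : (3 : ℝ) ≤ N := by exact_mod_cast hN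
  have hκ : 0 < β * (β + N - 2) := mul_pos_of_neg_of_neg (by linarith) (by linarith)
  have hlarge : ∀ᶠ r : ℝ in atTop, 2 * C / (β * (β + N - 2)) ≤ r ^ (β + N - 2 + (γ - 2)) :=
    (tendsto_rpow_atTop (by linarith)).eventually_ge_atTop _
  obtain ⟨R, hR⟩ := eventually_atTop.mp hlarge
  refine ⟨max R 1, le_max_right _ _, fun m hm x hx => ?_⟩
  have hone : 1 < ‖x‖ := (le_max_right _ _).trans_lt hx
  have hpos : 0 < ‖x‖ := one_pos.trans hone
  have hRx := hR ‖x‖ ((le_max_left _ _).trans hx.le)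
  rw [div_le_iff₀ hκ] at hRx
  rw [lap_rpow_add_rpow_mul_exp _ _ _ (norm_pos_iff.mp hpos)]
  have hmono : ‖x‖ ^ β ≤ ‖x‖ ^ (-((N : ℝ) - 2)) :=
    Real.rpow_le_rpow_of_exponent_le hone.le hβ₂.le
  have hsplit : ‖x‖ ^ (β - 2) =
      ‖x‖ ^ (β + N - 2 + (γ - 2)) * (‖x‖ ^ (-γ) * ‖x‖ ^ (-((N : ℝ) - 2))) := by
    rw [← Real.rpow_add hpos, ← Real.rpow_add hpos]
    ring_nf
  have hpotential : C * ‖x‖ ^ (-γ) * (‖x‖ ^ (-((N : ℝ) - 2)) + ‖x‖ ^ β)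
      ≤ β * (β + N - 2) * ‖x‖ ^ (β - 2) := by
    calc C * ‖x‖ ^ (-γ) * (‖x‖ ^ (-((N : ℝ) - 2)) + ‖x‖ ^ β)
        ≤ C * ‖x‖ ^ (-γ) * (‖x‖ ^ (-((N : ℝ) - 2)) + ‖x‖ ^ (-((N : ℝ) - 2))) := by gcongr
      _ = 2 * C * (‖x‖ ^ (-γ) * ‖x‖ ^ (-((N : ℝ) - 2))) := by ring
      _ ≤ ‖x‖ ^ (β + N - 2 + (γ - 2)) * (β * (β + N - 2))
            * (‖x‖ ^ (-γ) * ‖x‖ ^ (-((N : ℝ) - 2))) := by gcongr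
      _ = β * (β + N - 2) * ‖x‖ ^ (β - 2) := by rw [hsplit]; ring
  have hdrift : m * ((2 * -((N : ℝ) - 2) + N - 1) * ‖x‖ ^ (-((N : ℝ) - 2) - 1)
      + (2 * β + N - 1) * ‖x‖ ^ (β - 1)) ≤ 0 :=
    mul_nonpos_of_nonneg_of_nonpos hm (add_nonpos
      (mul_nonpos_of_nonpos_of_nonneg (by linarith) (by positivity))
      (mul_nonpos_of_nonpos_of_nonneg (by linarith) (by positivity)))
  have hexp := Real.exp_pos (-(m * ‖x‖))
  have hbracket := mul_nonpos_of_nonpos_of_nonneg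
    (add_nonpos (sub_nonpos.mpr hpotential) hdrift) hexp.le
  have hharmonic : -((N : ℝ) - 2) + N - 2 = 0 := by ring
  rw [hharmonic]
  linarith
end
end
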